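/- Convergence of fuzzy norms to the full norms (key step in the proof of Theorem 3.1, part 2): Fix an integer d ≥ 2. Let Q : ℤ → (0,∞) be even with Σ_{j∈ℤ} Q(j) < ∞, set Q̃(i) := sup_{|j| ≥ |i|} Q(j), and assume Σ_{i=1}^∞ (Σ_{j=1}^∞ Q̃(ij))^{(d+1)/2} < ∞. Then for every real p ≥ (d+1)/2, one has lim_{q→∞} ‖Q_q‖_{p,ℤ/qℤ} = ‖Q‖_{p,ℤ} and lim_{q→∞} ‖Q_q‖_{p,ℤ/qℤ∖{0̄}} = ‖Q‖_{p,ℤ∖{0}}. -/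

import Mathlib

/-!
Grouping the integers by residue class gives the identity
`∑_{i ∈ ℤ/qℤ} Q_q(i)^p = ∑_{j ∈ ℤ} Q(j) * Q_q(j mod q)^(p-1)` (`tsum_Qfuzzy_rpow`),
which moves the fuzzy sum to the fixed index set `ℤ`. As `q → ∞`, `Q_q(j mod q) → Q(j)` for each
fixed `j` (`tendsto_Qfuzzy`), because every `k ≠ j` leaves the class of `j` once `q > |k - j|`.
Since `0 < Q_q ≤ ∑ Q`, the summands are dominated by `Q(j) * (∑ Q)^(p-1)` for `p ≥ 1`, and
dominated convergence for series gives `∑ Q_q^p → ∑_j Q(j) * Q(j)^(p-1) = ∑_j Q(j)^p`.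
The sums without the zero index follow by subtracting the term `Q_q(0)^p → Q(0)^p`.
-/

open scoped BigOperators
open Filter Topology

noncomputable section

/-- The good set `G_d ⊆ (1,∞) × (0,∞)`. -/
def goodSet (d : ℕ) : Set (ℝ × ℝ) :=
  {gd | 1 < gd.1 ∧ 0 < gd.2 ∧ ∃ ε > 0,
    gd.2 + gd.1 * ε ^ d ≤ ε ∧
    2 * d * gd.1 * ε ^ (d - 1) + 2 * d * gd.2 * ε ^ d < 1}

/-- The fuzzy transfer operator `Q_q(ī) = Σ_{j ≡ i mod q} Q(j)`. -/
noncomputable def Qfuzzy (q : ℕ) (Q : ℤ → ℝ) (i : ZMod q) : ℝ :=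
  ∑' j : {j : ℤ // (j : ZMod q) = i}, Q j.1

/-- The `p`-norm `‖x‖_{p,ℤ}`. -/
noncomputable def normZ (p : ℝ) (x : ℤ → ℝ) : ℝ :=
  (∑' j : ℤ, |x j| ^ p) ^ (1 / p)

/-- The `p`-norm `‖x‖_{p,ℤ∖{0}}`. -/
noncomputable def normZ0 (p : ℝ) (x : ℤ → ℝ) : ℝ :=
  (∑' j : {j : ℤ // j ≠ 0}, |x j.1| ^ p) ^ (1 / p)

/-- The `p`-norm `‖x‖_{p,ℤ/qℤ}`. -/
noncomputable def normM (q : ℕ) (p : ℝ) (x : ZMod q → ℝ) : ℝ :=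
  (∑' i : ZMod q, |x i| ^ p) ^ (1 / p)

/-- The `p`-norm `‖x‖_{p,ℤ/qℤ∖{0̄}}`. -/
noncomputable def normM0 (q : ℕ) (p : ℝ) (x : ZMod q → ℝ) : ℝ :=
  (∑' i : {i : ZMod q // i ≠ 0}, |x i.1| ^ p) ^ (1 / p)

/-- `Q̃(i) := sup_{|j| ≥ |i|} Q(j)`. -/
noncomputable def Qtilde (Q : ℤ → ℝ) (i : ℤ) : ℝ :=
  ⨆ j : {j : ℤ // |i| ≤ |j|}, Q j.1

theorem Qfuzzy_eq_indicator (q : ℕ) (Q : ℤ → ℝ) (i : ZMod q) :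
    Qfuzzy q Q i = ∑' k : ℤ, {k : ℤ | (k : ZMod q) = i}.indicator Q k :=
  tsum_subtype {k : ℤ | (k : ZMod q) = i} Q

theorem Qfuzzy_pos (q : ℕ) {Q : ℤ → ℝ} (hQpos : ∀ j, 0 < Q j) (hQsum : Summable Q)
    (i : ZMod q) : 0 < Qfuzzy q Q i := by
  obtain ⟨j, hj⟩ := ZMod.intCast_surjective i
  exact (hQsum.subtype {k : ℤ | (k : ZMod q) = i}).tsum_pos (fun k => (hQpos k.1).le)
    ⟨j, hj⟩ (hQpos j)

theorem Qfuzzy_le (q : ℕ) {Q : ℤ → ℝ} (hQpos : ∀ j, 0 < Q j) (hQsum : Summable Q)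
    (i : ZMod q) : Qfuzzy q Q i ≤ ∑' j, Q j :=
  hQsum.tsum_subtype_le Q {k : ℤ | (k : ZMod q) = i} (fun k => (hQpos k).le)

/-- For fixed `j`, the only member of the residue class of `j` that persists as `q → ∞` is `j`. -/
theorem tendsto_Qfuzzy {Q : ℤ → ℝ} (hQpos : ∀ j, 0 < Q j) (hQsum : Summable Q) (j : ℤ) :
    Tendsto (fun q : ℕ => Qfuzzy q Q (j : ZMod q)) atTop (𝓝 (Q j)) := by
  have h : Tendsto
      (fun q : ℕ => ∑' k : ℤ, {k : ℤ | (k : ZMod q) = (j : ZMod q)}.indicator Q k) atTop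
      (𝓝 (∑' k : ℤ, if k = j then Q j else 0)) := by
    refine tendsto_tsum_of_dominated_convergence hQsum (fun k => ?_)
      (Eventually.of_forall fun q k => ?_)
    · by_cases hk : k = j
      · subst hk
        simp
      · refine tendsto_const_nhds.congr' ?_
        filter_upwards [eventually_gt_atTop (k - j).natAbs] with q hq
        have hne : ¬ (k : ZMod q) = (j : ZMod q) := by
          intro h
          have hdvd : (q : ℤ) ∣ k - j := by
            rw [← ZMod.intCast_eq_intCast_iff_dvd_sub]
            exact h.symm
          exact hk (sub_eq_zero.mp (Int.eq_zero_of_dvd_of_natAbs_lt_natAbs hdvd (by simpa using hq)))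
        simp [hk, hne]
    · rw [Real.norm_of_nonneg (Set.indicator_nonneg (fun k _ => (hQpos k).le) k)]
      exact Set.indicator_le_self' (fun k _ => (hQpos k).le) k
  simpa only [tsum_ite_eq, ← Qfuzzy_eq_indicator] using h

/-- The terms of the regrouped sum are dominated uniformly in `q` by a multiple of `Q`. -/
theorem norm_mul_Qfuzzy_rpow_le (q : ℕ) {Q : ℤ → ℝ} (hQpos : ∀ j, 0 < Q j)
    (hQsum : Summable Q) {p : ℝ} (hp : 1 ≤ p) (j : ℤ) :
    ‖Q j * Qfuzzy q Q (j : ZMod q) ^ (p - 1)‖ ≤ Q j * (∑' k, Q k) ^ (p - 1) := by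
  have h0 := Qfuzzy_pos q hQpos hQsum (j : ZMod q)
  rw [Real.norm_of_nonneg (mul_nonneg (hQpos j).le (Real.rpow_nonneg h0.le _))]
  exact mul_le_mul_of_nonneg_left
    (Real.rpow_le_rpow h0.le (Qfuzzy_le q hQpos hQsum _) (by linarith)) (hQpos j).le

/-- One factor `Q_q(i)` of `Q_q(i)^p` is expanded as a sum over the residue class of `i`, which
turns the sum over `ℤ/qℤ` into a sum over `ℤ`. -/
theorem tsum_Qfuzzy_rpow (q : ℕ) {Q : ℤ → ℝ} (hQpos : ∀ j, 0 < Q j)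
    (hQsum : Summable Q) {p : ℝ} (hp : 1 ≤ p) :
    ∑' i : ZMod q, |Qfuzzy q Q i| ^ p = ∑' j : ℤ, Q j * Qfuzzy q Q (j : ZMod q) ^ (p - 1) := by
  have hs : Summable fun j : ℤ => Q j * Qfuzzy q Q (j : ZMod q) ^ (p - 1) :=
    Summable.of_norm_bounded (hQsum.mul_right _)
      (norm_mul_Qfuzzy_rpow_le q hQpos hQsum hp)
  rw [← (hs.hasSum.tsum_fiberwise (fun j : ℤ => (j : ZMod q))).tsum_eq]
  refine tsum_congr fun i => ?_
  have h0 := Qfuzzy_pos q hQpos hQsum i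
  calc |Qfuzzy q Q i| ^ p = Qfuzzy q Q i * Qfuzzy q Q i ^ (p - 1) := by
        rw [abs_of_pos h0, ← Real.rpow_one_add' h0.le (by linarith)]
        ring_nf
    _ = ∑' b : {k : ℤ // (k : ZMod q) = i}, Q b.1 * Qfuzzy q Q i ^ (p - 1) := by
        rw [tsum_mul_right]
        rfl
    _ = _ := tsum_congr fun b =>
        congrArg (fun z : ZMod q => Q b.1 * Qfuzzy q Q z ^ (p - 1)) b.2.symm

theorem tendsto_tsum_Qfuzzy_rpow {Q : ℤ → ℝ} (hQpos : ∀ j, 0 < Q j)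
    (hQsum : Summable Q) {p : ℝ} (hp : 1 ≤ p) :
    Tendsto (fun q : ℕ => ∑' i : ZMod q, |Qfuzzy q Q i| ^ p) atTop
      (𝓝 (∑' j : ℤ, |Q j| ^ p)) := by
  have hlim : ∑' j : ℤ, |Q j| ^ p = ∑' j : ℤ, Q j * Q j ^ (p - 1) := by
    refine tsum_congr fun j => ?_
    rw [abs_of_pos (hQpos j), ← Real.rpow_one_add' (hQpos j).le (by linarith)]
    ring_nf
  rw [hlim]
  simp only [tsum_Qfuzzy_rpow _ hQpos hQsum hp]
  exact tendsto_tsum_of_dominated_convergence (hQsum.mul_right _)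
    (fun j => ((tendsto_Qfuzzy hQpos hQsum j).rpow_const (Or.inl (hQpos j).ne')).const_mul _)
    (Eventually.of_forall fun q j => norm_mul_Qfuzzy_rpow_le q hQpos hQsum hp j)

theorem summable_abs_rpow {Q : ℤ → ℝ} (hQpos : ∀ j, 0 < Q j)
    (hQsum : Summable Q) {p : ℝ} (hp : 1 ≤ p) : Summable fun j : ℤ => |Q j| ^ p := by
  refine Summable.of_norm_bounded (hQsum.mul_right ((∑' k, Q k) ^ (p - 1))) fun j => ?_
  have h0 := hQpos j
  rw [abs_of_pos h0, Real.norm_of_nonneg (Real.rpow_nonneg h0.le _)]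
  calc Q j ^ p = Q j * Q j ^ (p - 1) := by
        rw [← Real.rpow_one_add' h0.le (by linarith)]
        ring_nf
    _ ≤ _ := mul_le_mul_of_nonneg_left (Real.rpow_le_rpow h0.le
        (hQsum.le_tsum j fun k _ => (hQpos k).le) (by linarith)) h0.le

theorem tsum_subtype_ne {β : Type*} {f : β → ℝ} (hf : Summable f) (b : β) :
    ∑' x : {x : β // x ≠ b}, f x.1 = ∑' x, f x - f b := by
  have h := hf.tsum_subtype_add_tsum_subtype_compl {b}
  rw [tsum_singleton] at h
  rw [← h, add_sub_cancel_left]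
  rfl

/-- key step in the proof of Theorem 3.1, part 2: convergence of the
fuzzy norms to the full norms as the period `q → ∞`, for every `p ≥ (d+1)/2`, under the
double-sum condition on `Q̃`. -/
theorem stmt13 (d : ℕ) (hd : 2 ≤ d)
    (Q : ℤ → ℝ) (hQpos : ∀ j, 0 < Q j) (hQeven : ∀ j, Q (-j) = Q j)
    (hQsum : Summable Q)
    (hcond : Summable fun i : ℕ =>
      (∑' j : ℕ, Qtilde Q (((i : ℤ) + 1) * ((j : ℤ) + 1))) ^ (((d : ℝ) + 1) / 2)) :
    ∀ p : ℝ, ((d : ℝ) + 1) / 2 ≤ p →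
      Tendsto (fun q : ℕ => normM q p (Qfuzzy q Q)) atTop (𝓝 (normZ p Q)) ∧
      Tendsto (fun q : ℕ => normM0 q p (Qfuzzy q Q)) atTop (𝓝 (normZ0 p Q)) := by
  intro p hdp
  have hd' : (2 : ℝ) ≤ d := by exact_mod_cast hd
  have hp : 1 ≤ p := by linarith
  have hexp : 0 ≤ 1 / p := by positivity
  have hfull := tendsto_tsum_Qfuzzy_rpow hQpos hQsum hp
  refine ⟨hfull.rpow_const (Or.inr hexp), ?_⟩
  have hzero : Tendsto (fun q : ℕ => |Qfuzzy q Q 0| ^ p) atTop (𝓝 (|Q 0| ^ p)) := by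
    have h := tendsto_Qfuzzy hQpos hQsum 0
    simp only [Int.cast_zero] at h
    exact h.abs.rpow_const (Or.inr (by linarith))
  have hpunct : Tendsto (fun q : ℕ => ∑' i : {i : ZMod q // i ≠ 0}, |Qfuzzy q Q i.1| ^ p) atTop
      (𝓝 (∑' j : {j : ℤ // j ≠ 0}, |Q j.1| ^ p)) := by
    rw [tsum_subtype_ne (summable_abs_rpow hQpos hQsum hp) 0]
    refine (hfull.sub hzero).congr' ?_
    -- for `q ≥ 1` the type `ZMod q` is finite, so summability is automatic
    filter_upwards [eventually_ge_atTop 1] with q hq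
    have : NeZero q := ⟨by omega⟩
    exact (tsum_subtype_ne (f := fun i : ZMod q => |Qfuzzy q Q i| ^ p)
      (hasSum_fintype _).summable 0).symm
  exact hpunct.rpow_const (Or.inr hexp)
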